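/- arXiv:1604.03220 — 3 statements merged into one kernel-verified Lean document; each statement's English description precedes it below -/
import Mathlib

section
/- First de Casteljau algorithm for (p,q)-Bézier curves: let n ≥ 1, let p, q be reals with 0 < q < p, let d ≥ 1, and let P_0, …, P_n ∈ ℝ^d. Fix a real t and define recursively Q_i^0 = P_i for i = 0, …, n, and Q_i^k = (p^{n−k} − p^i q^{n−k−i} t) Q_i^{k−1} + p^i q^{n−k−i} t Q_{i+1}^{k−1} for k = 1, …, n and i = 0, …, n−k. Then Q_0^n = p^{n(n−1)/2} Σ_{i=0}^{n} P_i B_i^n(t;p,q). -/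
/-- The (p,q)-integer `[n]_{p,q} = Σ_{j=0}^{n-1} p^{n-1-j} q^j`. -/
noncomputable def pqInt (p q : ℝ) (n : ℕ) : ℝ :=
  ∑ j ∈ Finset.range n, p ^ (n - 1 - j) * q ^ j

/-- The (p,q)-factorial `[n]_{p,q}! = ∏_{j=1}^{n} [j]_{p,q}`. -/
noncomputable def pqFact (p q : ℝ) : ℕ → ℝ
  | 0 => 1
  | n + 1 => pqFact p q n * pqInt p q (n + 1)

/-- The (p,q)-binomial coefficient `[n choose k]_{p,q}`. -/
noncomputable def pqBinom (p q : ℝ) (n k : ℕ) : ℝ :=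
  pqFact p q n / (pqFact p q k * pqFact p q (n - k))

/-- The (p,q)-Bernstein basis function
`B_k^n(t;p,q) = p^{k(k-1)/2 - n(n-1)/2} [n choose k]_{p,q} t^k ∏_{s=0}^{n-k-1} (p^s - q^s t)`. -/
noncomputable def pqBernstein (p q : ℝ) (n k : ℕ) (t : ℝ) : ℝ :=
  p ^ (k * (k - 1) / 2) / p ^ (n * (n - 1) / 2) * pqBinom p q n k * t ^ k *
    ∏ s ∈ Finset.range (n - k), (p ^ s - q ^ s * t)

/-!
A de Casteljau step applied to control points `R₀, …, R_{m+1}` produces `m + 1` points. Regrouping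
their degree `m` Bernstein combination by the `Rᵢ` yields `p ^ m` times the degree `m + 1`
combination, because the (p,q)-Pascal rule turns into the matching recurrence in the degree for the
Bernstein functions. Peeling off the first step of the algorithm then lowers `n` by one, and the
factors `p ^ m` accumulate to `p ^ (n * (n - 1) / 2)`.
-/

section Coefficients

variable {p q : ℝ} {m n k i : ℕ}

theorem pqInt_add (a b : ℕ) :
    pqInt p q (a + b) = p ^ a * pqInt p q b + q ^ b * pqInt p q a := by
  have low_terms : ∑ j ∈ Finset.range b, p ^ (a + b - 1 - j) * q ^ j = p ^ a * pqInt p q b := by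
    rw [pqInt, Finset.mul_sum]
    refine Finset.sum_congr rfl fun j hj => ?_
    rw [← mul_assoc, ← pow_add]
    congr 2
    grind
  have high_terms : ∑ j ∈ Finset.range a, p ^ (a + b - 1 - (b + j)) * q ^ (b + j) =
      q ^ b * pqInt p q a := by
    rw [pqInt, Finset.mul_sum]
    refine Finset.sum_congr rfl fun j _ => ?_
    rw [show a + b - 1 - (b + j) = a - 1 - j by lia, pow_add, mul_left_comm]
  rw [← low_terms, ← high_terms, pqInt, add_comm a b, Finset.sum_range_add]

theorem pqInt_succ_pos (hp : 0 < p) (hq : 0 ≤ q) (n : ℕ) : 0 < pqInt p q (n + 1) := by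
  rw [pqInt, Finset.sum_range_succ']
  positivity

theorem pqFact_pos (hp : 0 < p) (hq : 0 ≤ q) (n : ℕ) : 0 < pqFact p q n := by
  induction n with
  | zero => exact one_pos
  | succ n ih => exact mul_pos ih (pqInt_succ_pos hp hq n)

theorem pqFact_ne_zero_of_le (hkn : k ≤ n) (hn : pqFact p q n ≠ 0) : pqFact p q k ≠ 0 := by
  induction n, hkn using Nat.le_induction with
  | base => exact hn
  | succ n _ ih => exact ih (left_ne_zero_of_mul hn)

theorem pqBinom_zero_right (hn : pqFact p q n ≠ 0) : pqBinom p q n 0 = 1 := by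
  simp [pqBinom, pqFact, hn]

theorem pqBinom_self (hn : pqFact p q n ≠ 0) : pqBinom p q n n = 1 := by
  simp [pqBinom, pqFact, hn]

theorem pqBinom_succ_succ (hm : pqFact p q (m + 1) ≠ 0) (hi : i < m) :
    pqBinom p q (m + 1) (i + 1) =
      p ^ (i + 1) * pqBinom p q m (i + 1) + q ^ (m - i) * pqBinom p q m i := by
  obtain ⟨r, rfl⟩ := Nat.exists_eq_add_of_lt hi
  have hi_fact : pqFact p q (i + 1) ≠ 0 := pqFact_ne_zero_of_le (by lia) hm
  have hr_fact : pqFact p q (r + 1) ≠ 0 := pqFact_ne_zero_of_le (by lia) hm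
  have split : pqInt p q (i + r + 1 + 1) =
      p ^ (i + 1) * pqInt p q (r + 1) + q ^ (r + 1) * pqInt p q (i + 1) := by
    rw [← pqInt_add]
    congr 1
    lia
  rw [show i + r + 1 - i = r + 1 by lia]
  simp only [pqBinom, show i + r + 1 + 1 - (i + 1) = r + 1 by lia,
    show i + r + 1 - (i + 1) = r by lia, show i + r + 1 - i = r + 1 by lia]
  simp only [pqFact, mul_ne_zero_iff] at hi_fact hr_fact ⊢
  obtain ⟨hi_fact, hi_int⟩ := hi_fact
  obtain ⟨hr_fact, hr_int⟩ := hr_fact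
  rw [split]
  field_simp

end Coefficients

section Bernstein

variable {p q : ℝ} {m n i : ℕ}

theorem pqBernstein_self (hp : p ≠ 0) (hn : pqFact p q n ≠ 0) (t : ℝ) :
    pqBernstein p q n n t = t ^ n := by
  simp [pqBernstein, pqBinom_self hn, hp]

theorem pow_mul_pqBernstein_succ_zero (hp : p ≠ 0) (hm : pqFact p q (m + 1) ≠ 0) (t : ℝ) :
    p ^ m * pqBernstein p q (m + 1) 0 t = (p ^ m - q ^ m * t) * pqBernstein p q m 0 t := by
  simp only [pqBernstein, pqBinom_zero_right hm,
    pqBinom_zero_right (pqFact_ne_zero_of_le m.le_succ hm), Nat.triangle_succ, pow_add,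
    Nat.sub_zero, Finset.prod_range_succ]
  generalize ∏ s ∈ Finset.range m, (p ^ s - q ^ s * t) = X
  field_simp

theorem pow_mul_pqBernstein_succ_succ (hp : p ≠ 0) (hm : pqFact p q (m + 1) ≠ 0) (hi : i < m)
    (t : ℝ) :
    p ^ m * pqBernstein p q (m + 1) (i + 1) t =
      (p ^ m - p ^ (i + 1) * q ^ (m - (i + 1)) * t) * pqBernstein p q m (i + 1) t +
        p ^ i * q ^ (m - i) * t * pqBernstein p q m i t := by
  have pascal := pqBinom_succ_succ hm hi
  obtain ⟨r, rfl⟩ := Nat.exists_eq_add_of_lt hi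
  simp only [pqBernstein, pascal, Nat.triangle_succ, pow_add,
    show i + r + 1 + 1 - (i + 1) = r + 1 by lia, show i + r + 1 - (i + 1) = r by lia,
    show i + r + 1 - i = r + 1 by lia, Finset.prod_range_succ]
  field_simp

variable {E : Type*} [AddCommGroup E] [Module ℝ E]

theorem sum_pqBernstein_smul_deCasteljau_step (hp : p ≠ 0) (hm : pqFact p q (m + 1) ≠ 0)
    (t : ℝ) (R : ℕ → E) :
    ∑ i ∈ Finset.range (m + 1), pqBernstein p q m i t •
        ((p ^ m - p ^ i * q ^ (m - i) * t) • R i + (p ^ i * q ^ (m - i) * t) • R (i + 1)) =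
      p ^ m • ∑ i ∈ Finset.range (m + 2), pqBernstein p q (m + 1) i t • R i := by
  have first : p ^ m * pqBernstein p q (m + 1) 0 t =
      pqBernstein p q m 0 t * (p ^ m - p ^ 0 * q ^ (m - 0) * t) := by
    rw [pow_mul_pqBernstein_succ_zero hp hm, pow_zero, one_mul, Nat.sub_zero, mul_comm]
  have last : p ^ m * pqBernstein p q (m + 1) (m + 1) t =
      pqBernstein p q m m t * (p ^ m * q ^ (m - m) * t) := by
    rw [pqBernstein_self hp hm, pqBernstein_self hp (pqFact_ne_zero_of_le m.le_succ hm),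
      Nat.sub_self]
    ring
  have middle : ∀ i ∈ Finset.range m,
      (p ^ m * pqBernstein p q (m + 1) (i + 1) t) • R (i + 1) =
        (pqBernstein p q m (i + 1) t * (p ^ m - p ^ (i + 1) * q ^ (m - (i + 1)) * t)) • R (i + 1) +
          (pqBernstein p q m i t * (p ^ i * q ^ (m - i) * t)) • R (i + 1) := fun i hi => by
    rw [pow_mul_pqBernstein_succ_succ hp hm (Finset.mem_range.mp hi), add_smul,
      mul_comm (pqBernstein p q m (i + 1) t), mul_comm (pqBernstein p q m i t)]
  simp only [smul_add, smul_smul, Finset.sum_add_distrib, Finset.smul_sum]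
  rw [Finset.sum_range_succ' _ m, Finset.sum_range_succ _ m, Finset.sum_range_succ _ (m + 1),
    Finset.sum_range_succ' _ m, Finset.sum_congr rfl middle, Finset.sum_add_distrib, first, last]
  abel

end Bernstein

theorem pq_deCasteljau_first_general {E : Type*} [AddCommGroup E] [Module ℝ E] (n : ℕ) {p q : ℝ}
    (hp : p ≠ 0) (hn : pqFact p q n ≠ 0) (P : ℕ → E) (t : ℝ) (Q : ℕ → ℕ → E)
    (hQ0 : ∀ i ≤ n, Q 0 i = P i)
    (hQ : ∀ k, 1 ≤ k → k ≤ n → ∀ i ≤ n - k,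
      Q k i = (p ^ (n - k) - p ^ i * q ^ (n - k - i) * t) • Q (k - 1) i +
        (p ^ i * q ^ (n - k - i) * t) • Q (k - 1) (i + 1)) :
    Q n 0 = (p ^ (n * (n - 1) / 2) : ℝ) •
      ∑ i ∈ Finset.range (n + 1), pqBernstein p q n i t • P i := by
  induction n generalizing P Q with
  | zero => simp [hQ0, pqBernstein_self hp hn]
  | succ m ih =>
    have first_step : ∀ i ≤ m, Q 1 i = (p ^ m - p ^ i * q ^ (m - i) * t) • P i +
        (p ^ i * q ^ (m - i) * t) • P (i + 1) := fun i hi => by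
      rw [← hQ0 i (by lia), ← hQ0 (i + 1) (by lia)]
      exact hQ 1 le_rfl (by lia) i hi
    have later_steps : ∀ k, 1 ≤ k → k ≤ m → ∀ i ≤ m - k,
        Q (k + 1) i = (p ^ (m - k) - p ^ i * q ^ (m - k - i) * t) • Q (k - 1 + 1) i +
          (p ^ i * q ^ (m - k - i) * t) • Q (k - 1 + 1) (i + 1) := fun k hk hkm i hi => by
      simpa [Nat.sub_add_cancel hk] using hQ (k + 1) (by lia) (by lia) i (by lia)
    rw [ih (left_ne_zero_of_mul hn) _ (fun k => Q (k + 1)) first_step later_steps,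
      sum_pqBernstein_smul_deCasteljau_step hp hn, smul_smul, ← pow_add, Nat.triangle_succ]

/-- the first de Casteljau algorithm for (p,q)-Bézier curves.
With `Q_i^0 = P_i` and
`Q_i^k = (p^{n-k} - p^i q^{n-k-i} t) Q_i^{k-1} + p^i q^{n-k-i} t Q_{i+1}^{k-1}`,
one has `Q_0^n = p^{n(n-1)/2} Σ_{i=0}^{n} P_i B_i^n(t;p,q)`. -/
theorem pq_deCasteljau_first (n d : ℕ) (hn : 1 ≤ n) (hd : 1 ≤ d)
    (p q : ℝ) (h0 : 0 < q) (hqp : q < p)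
    (P : ℕ → Fin d → ℝ) (t : ℝ) (Q : ℕ → ℕ → Fin d → ℝ)
    (hQ0 : ∀ i ≤ n, Q 0 i = P i)
    (hQ : ∀ k, 1 ≤ k → k ≤ n → ∀ i ≤ n - k,
      Q k i = (p ^ (n - k) - p ^ i * q ^ (n - k - i) * t) • Q (k - 1) i +
        (p ^ i * q ^ (n - k - i) * t) • Q (k - 1) (i + 1)) :
    Q n 0 = (p ^ (n * (n - 1) / 2) : ℝ) •
      ∑ i ∈ Finset.range (n + 1), pqBernstein p q n i t • P i :=
  pq_deCasteljau_first_general n (h0.trans hqp).ne' (pqFact_pos (h0.trans hqp) h0.le n).ne'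
    P t Q hQ0 hQ
end

section
/- (p,q)-blossom of a monomial: let n ≥ 1, let 0 ≤ k ≤ n, and let p, q be reals with 0 < q < p. Define m : ℝ^n → ℝ by m(u_1, …, u_n) = φ_{n,k}(u_1, …, u_n) / φ_{n,k}(p^{n−1}, p^{n−2}q, …, q^{n−1}), where φ_{n,0} = 1 and the denominator arguments are p^{n−i} q^{i−1} for i = 1, …, n (the denominator being nonzero since 0 < q < p). Then m is symmetric, m is multiaffine, and m(p^{n−1}t, p^{n−2}q t, …, q^{n−1}t) = t^k for every real t; that is, m is the (p,q)-blossom of the monomial t^k regarded as a polynomial of degree n. -/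
/-- The `k`-th elementary symmetric polynomial in `n` variables:
`φ_{n,k}(u_1, …, u_n) = Σ_{1 ≤ i_1 < … < i_k ≤ n} u_{i_1} ⋯ u_{i_k}`. -/
noncomputable def esymmEval (n k : ℕ) (u : Fin n → ℝ) : ℝ :=
  ∑ S ∈ Finset.powersetCard k (Finset.univ : Finset (Fin n)), ∏ i ∈ S, u i

/-- A function `f : ℝ^n → ℝ` is symmetric if it is invariant under all permutations
of its arguments. -/
def IsSymmetricFn (n : ℕ) (f : (Fin n → ℝ) → ℝ) : Prop :=
  ∀ (σ : Equiv.Perm (Fin n)) (u : Fin n → ℝ), f (fun i => u (σ i)) = f u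

/-- A function `f : ℝ^n → ℝ` is multiaffine if, fixing all variables except the `j`-th,
the resulting one-variable function is affine (degree at most one). -/
def IsMultiaffine (n : ℕ) (f : (Fin n → ℝ) → ℝ) : Prop :=
  ∀ (j : Fin n) (u : Fin n → ℝ), ∃ a b : ℝ,
    ∀ x : ℝ, f (Function.update u j x) = a * x + b

theorem esymmEval_eq_esymm (n k : ℕ) (u : Fin n → ℝ) :
    esymmEval n k u = (Finset.univ.val.map u).esymm k :=
  (Finset.esymm_map_val u Finset.univ k).symm

theorem isSymmetricFn_esymmEval (n k : ℕ) : IsSymmetricFn n (esymmEval n k) := fun σ u => by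
  have same_values : Finset.univ.val.map (fun i => u (σ i)) = Finset.univ.val.map u := by
    conv_rhs => rw [← Multiset.map_univ_val_equiv σ, Multiset.map_map, Function.comp_def]
  rw [esymmEval_eq_esymm, same_values, ← esymmEval_eq_esymm]

theorem isMultiaffine_prod {n : ℕ} (S : Finset (Fin n)) :
    IsMultiaffine n (fun u => ∏ i ∈ S, u i) := by
  intro j u
  by_cases hj : j ∈ S
  · exact ⟨∏ i ∈ S \ {j}, u i, 0, fun x =>
      (Finset.prod_update_of_mem hj u x).trans (by ring)⟩
  · exact ⟨0, ∏ i ∈ S, u i, fun x =>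
      (Finset.prod_update_of_notMem hj u x).trans (by ring)⟩

theorem IsMultiaffine.sum {n : ℕ} {ι : Type*} (s : Finset ι) {f : ι → (Fin n → ℝ) → ℝ}
    (hf : ∀ i ∈ s, IsMultiaffine n (f i)) : IsMultiaffine n (fun u => ∑ i ∈ s, f i u) := by
  intro j u
  choose! a b hab using fun i hi => hf i hi j u
  refine ⟨∑ i ∈ s, a i, ∑ i ∈ s, b i, fun x => ?_⟩
  rw [Finset.sum_mul, ← Finset.sum_add_distrib]
  exact Finset.sum_congr rfl fun i hi => hab i hi x

theorem IsMultiaffine.div_const {n : ℕ} {f : (Fin n → ℝ) → ℝ} (hf : IsMultiaffine n f) (c : ℝ) :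
    IsMultiaffine n (fun u => f u / c) := fun j u => by
  obtain ⟨a, b, hab⟩ := hf j u
  exact ⟨a / c, b / c, fun x => (congrArg (· / c) (hab x)).trans (by ring)⟩

theorem isMultiaffine_esymmEval (n k : ℕ) : IsMultiaffine n (esymmEval n k) :=
  IsMultiaffine.sum _ fun S _ => isMultiaffine_prod S

theorem esymmEval_mul_const (n k : ℕ) (u : Fin n → ℝ) (t : ℝ) :
    esymmEval n k (fun i => u i * t) = esymmEval n k u * t ^ k := by
  simp only [esymmEval, Finset.sum_mul]
  refine Finset.sum_congr rfl fun S hS => ?_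
  rw [← (Finset.mem_powersetCard.1 hS).2, Finset.prod_mul_pow_card]

theorem esymmEval_pos {n k : ℕ} (hk : k ≤ n) {u : Fin n → ℝ} (hu : ∀ i, 0 < u i) :
    0 < esymmEval n k u :=
  Finset.sum_pos (fun _ _ => Finset.prod_pos fun i _ => hu i) <|
    Finset.powersetCard_nonempty.2 <| hk.trans_eq (Finset.card_fin n).symm

theorem pq_blossom_monomial_general (n k : ℕ) (v : Fin n → ℝ) (hv : esymmEval n k v ≠ 0)
    (m : (Fin n → ℝ) → ℝ) (hm : ∀ u, m u = esymmEval n k u / esymmEval n k v) :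
    IsSymmetricFn n m ∧ IsMultiaffine n m ∧ ∀ t : ℝ, m (fun i => v i * t) = t ^ k := by
  refine ⟨fun σ u => ?_, ?_, fun t => ?_⟩
  · rw [hm, hm, isSymmetricFn_esymmEval n k σ u]
  · rw [funext hm]
    exact (isMultiaffine_esymmEval n k).div_const _
  · rw [hm, esymmEval_mul_const, mul_div_cancel_left₀ _ hv]

/-- the (p,q)-blossom of the monomial `t^k` (regarded as a polynomial of
degree `n`) is `m(u_1, …, u_n) = φ_{n,k}(u_1, …, u_n) / φ_{n,k}(p^{n-1}, p^{n-2}q, …, q^{n-1})`: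
it is symmetric, multiaffine and reduces to `t^k` along the (p,q)-diagonal. -/
theorem pq_blossom_monomial (n k : ℕ) (hn : 1 ≤ n) (hk : k ≤ n)
    (p q : ℝ) (h0 : 0 < q) (hqp : q < p)
    (m : (Fin n → ℝ) → ℝ)
    (hm : ∀ u, m u =
      esymmEval n k u / esymmEval n k (fun i => p ^ (n - 1 - (i : ℕ)) * q ^ (i : ℕ))) :
    IsSymmetricFn n m ∧ IsMultiaffine n m ∧
      ∀ t : ℝ, m (fun i => p ^ (n - 1 - (i : ℕ)) * q ^ (i : ℕ) * t) = t ^ k := by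
  have h_nodes (i : Fin n) : 0 < p ^ (n - 1 - (i : ℕ)) * q ^ (i : ℕ) :=
    mul_pos (pow_pos (h0.trans hqp) _) (pow_pos h0 _)
  exact pq_blossom_monomial_general n k _ (esymmEval_pos hk h_nodes).ne' m hm
end

section
/- Uniqueness of (p,q)-Bézier control points: let n ≥ 1, let p, q be reals with 0 < q < p, let d ≥ 1, and let P_0, …, P_n and Q_0, …, Q_n be points of ℝ^d. If Σ_{k=0}^{n} P_k B_k^n(t;p,q) = Σ_{k=0}^{n} Q_k B_k^n(t;p,q) for all real t, then P_k = Q_k for k = 0, …, n. -/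
/-!
The `k`-th basis function is a polynomial in `t` of degree at most `n` whose lowest-order term is a
nonzero multiple of `t ^ k`. Distinct orders of vanishing at `0` make the `n + 1` basis polynomials
linearly independent, and the degree bound makes their restrictions to any `n + 1` points linearly
independent as well, so already `n + 1` points of a curve determine its control points.
-/

open Polynomial

section LinearIndependence

variable {ι R : Type*}

theorem linearIndependent_of_injective_natTrailingDegree [Ring R] [NoZeroDivisors R]
    {f : ι → R[X]} (hf : ∀ i, f i ≠ 0) (hinj : Function.Injective fun i ↦ (f i).natTrailingDegree) :
    LinearIndependent R f := by
  rw [linearIndependent_iff']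
  intro s a hsum i hi
  induction hd : (f i).natTrailingDegree using Nat.strong_induction_on generalizing i with
  | _ d ih =>
    have hcoeff : ∑ j ∈ s, a j * (f j).coeff d = 0 := by
      simpa only [finsetSum_coeff, coeff_smul, smul_eq_mul, coeff_zero] using
        congrArg (coeff · d) hsum
    have hother : ∀ j ∈ s, j ≠ i → a j * (f j).coeff d = 0 := by
      intro j hj hji
      rcases lt_trichotomy (f j).natTrailingDegree d with hlt | heq | hgt
      · rw [ih _ hlt j hj rfl, zero_mul]
      · exact absurd (hinj (heq.trans hd.symm)) hji
      · rw [coeff_eq_zero_of_lt_natTrailingDegree hgt, mul_zero]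
    rw [Finset.sum_eq_single_of_mem i hi hother, ← hd] at hcoeff
    exact (mul_eq_zero.mp hcoeff).resolve_right (trailingCoeff_nonzero_iff_nonzero.mpr (hf i))

theorem linearIndependent_eval_of_degree_lt_card [CommRing R] [IsDomain R]
    {f : ι → R[X]} (hf : LinearIndependent R f) (S : Finset R)
    (hdeg : ∀ i, (f i).degree < S.card) :
    LinearIndependent R fun i (t : S) ↦ (f i).eval (t : R) := by
  rw [linearIndependent_iff'] at hf ⊢
  intro s a hsum
  refine hf s a (eq_zero_of_degree_lt_of_eval_finset_eq_zero S ?_ fun t ht ↦ ?_)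
  · exact mem_degreeLT.mp <| Submodule.sum_mem _ fun i _ ↦
      Submodule.smul_mem _ _ (mem_degreeLT.mpr (hdeg i))
  · simpa [eval_finsetSum] using congrFun hsum ⟨t, ht⟩

theorem eq_zero_of_linearIndependent_of_sum_apply_smul_eq_zero {X V : Type*} [Fintype ι]
    [CommRing R] [AddCommMonoid V] [Module R V] [Module.Projective R V] {f : ι → X → R}
    (hf : LinearIndependent R f) {v : ι → V} (hv : ∀ x, ∑ i, f i x • v i = 0) : v = 0 := by
  funext i
  refine (Module.forall_dual_apply_eq_zero_iff R (v i)).mp fun φ ↦ ?_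
  refine Fintype.linearIndependent_iff.mp hf (fun i ↦ φ (v i)) (funext fun x ↦ ?_) i
  simpa [mul_comm] using congrArg φ (hv x)

end LinearIndependence

section Coefficients

variable {p q : ℝ}

theorem pqInt_eq_pow_mul_geom_sum (hp : p ≠ 0) (n : ℕ) :
    pqInt p q n = p ^ (n - 1) * ∑ j ∈ Finset.range n, (q / p) ^ j := by
  rw [pqInt, Finset.mul_sum]
  refine Finset.sum_congr rfl fun j hj ↦ ?_
  have hjn : j ≤ n - 1 := Nat.le_sub_one_of_lt (Finset.mem_range.mp hj)
  rw [pow_sub₀ p hp hjn, div_pow]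
  ring

theorem pqInt_ne_zero (hp : p ≠ 0) (hq : q ≠ -p) {n : ℕ} (hn : n ≠ 0) : pqInt p q n ≠ 0 := by
  have hratio : q / p ≠ -1 := by rwa [Ne, div_eq_iff hp, neg_one_mul]
  rw [pqInt_eq_pow_mul_geom_sum hp]
  exact mul_ne_zero (pow_ne_zero _ hp) (geom_sum_ne_zero hratio hn)

theorem pqFact_ne_zero (hp : p ≠ 0) (hq : q ≠ -p) : ∀ n : ℕ, pqFact p q n ≠ 0
  | 0 => one_ne_zero
  | n + 1 => mul_ne_zero (pqFact_ne_zero hp hq n) (pqInt_ne_zero hp hq n.succ_ne_zero)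

theorem pqBinom_ne_zero (hp : p ≠ 0) (hq : q ≠ -p) (n k : ℕ) : pqBinom p q n k ≠ 0 :=
  div_ne_zero (pqFact_ne_zero hp hq n)
    (mul_ne_zero (pqFact_ne_zero hp hq k) (pqFact_ne_zero hp hq (n - k)))

end Coefficients

/-- The `(p,q)`-Bernstein basis function `pqBernstein p q n k` as a polynomial in `t`, which gives
access to its degree and its order of vanishing at `0`. -/
noncomputable def pqBernsteinPolynomial (p q : ℝ) (n k : ℕ) : ℝ[X] :=
  C (p ^ (k * (k - 1) / 2) / p ^ (n * (n - 1) / 2) * pqBinom p q n k) * X ^ k *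
    ∏ s ∈ Finset.range (n - k), (C (p ^ s) - C (q ^ s) * X)

namespace pqBernsteinPolynomial

theorem eval_eq_pqBernstein (p q : ℝ) (n k : ℕ) (t : ℝ) :
    (pqBernsteinPolynomial p q n k).eval t = pqBernstein p q n k t := by
  simp [pqBernsteinPolynomial, pqBernstein, eval_prod]

theorem natDegree_le (p q : ℝ) {n k : ℕ} (hk : k ≤ n) :
    (pqBernsteinPolynomial p q n k).natDegree ≤ n := by
  have hfactor (s : ℕ) : (C (p ^ s) - C (q ^ s) * X).natDegree ≤ 1 := by compute_degree
  have hprod : (∏ s ∈ Finset.range (n - k), (C (p ^ s) - C (q ^ s) * X)).natDegree ≤ n - k := by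
    refine (natDegree_prod_le _ _).trans ?_
    simpa using Finset.sum_le_card_nsmul (Finset.range (n - k)) _ 1 fun s _ ↦ hfactor s
  calc (pqBernsteinPolynomial p q n k).natDegree
      ≤ k + (n - k) := natDegree_mul_le_of_le (natDegree_C_mul_X_pow_le _ k) hprod
    _ = n := Nat.add_sub_cancel' hk

variable {p q : ℝ}

theorem exists_eq_mul_X_pow (hp : p ≠ 0) (hq : q ≠ -p) (n k : ℕ) :
    ∃ g : ℝ[X], g.coeff 0 ≠ 0 ∧ pqBernsteinPolynomial p q n k = g * X ^ k := by
  refine ⟨C (p ^ (k * (k - 1) / 2) / p ^ (n * (n - 1) / 2) * pqBinom p q n k) *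
    ∏ s ∈ Finset.range (n - k), (C (p ^ s) - C (q ^ s) * X), ?_, mul_right_comm _ _ _⟩
  simp [coeff_zero_eq_eval_zero, eval_prod, Finset.prod_eq_zero_iff, hp, pqBinom_ne_zero hp hq]

theorem ne_zero (hp : p ≠ 0) (hq : q ≠ -p) (n k : ℕ) : pqBernsteinPolynomial p q n k ≠ 0 := by
  obtain ⟨g, hg, hfac⟩ := exists_eq_mul_X_pow hp hq n k
  rw [hfac]
  exact mul_ne_zero (fun h ↦ hg (by rw [h, coeff_zero])) (pow_ne_zero k X_ne_zero)

theorem natTrailingDegree_eq (hp : p ≠ 0) (hq : q ≠ -p) (n k : ℕ) :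
    (pqBernsteinPolynomial p q n k).natTrailingDegree = k := by
  obtain ⟨g, hg, hfac⟩ := exists_eq_mul_X_pow hp hq n k
  have hg_ne : g ≠ 0 := fun h ↦ hg (by rw [h, coeff_zero])
  rw [hfac, natTrailingDegree_mul_X_pow hg_ne, natTrailingDegree_eq_zero.mpr (Or.inr hg), zero_add]

theorem linearIndependent (hp : p ≠ 0) (hq : q ≠ -p) (n : ℕ) :
    LinearIndependent ℝ (pqBernsteinPolynomial p q n) :=
  linearIndependent_of_injective_natTrailingDegree (ne_zero hp hq n) <| by
    simp only [natTrailingDegree_eq hp hq, Function.Injective, imp_self, implies_true]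

end pqBernsteinPolynomial

theorem linearIndependent_pqBernstein_of_lt_card {p q : ℝ} (hp : p ≠ 0) (hq : q ≠ -p) {n : ℕ}
    {S : Finset ℝ} (hS : n < S.card) :
    LinearIndependent ℝ fun (k : Fin (n + 1)) (t : S) ↦ pqBernstein p q n k t := by
  have hdeg (k : Fin (n + 1)) : (pqBernsteinPolynomial p q n k).degree < S.card :=
    degree_le_natDegree.trans_lt <| Nat.cast_lt.mpr <|
      (pqBernsteinPolynomial.natDegree_le p q k.is_le).trans_lt hS
  have hlin : LinearIndependent ℝ fun k : Fin (n + 1) ↦ pqBernsteinPolynomial p q n k :=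
    (pqBernsteinPolynomial.linearIndependent hp hq n).comp _ Fin.val_injective
  simpa only [pqBernsteinPolynomial.eval_eq_pqBernstein] using
    linearIndependent_eval_of_degree_lt_card hlin S hdeg

theorem pqBezier_control_points_unique_general {V : Type*} [AddCommGroup V] [Module ℝ V]
    {p q : ℝ} (hp : p ≠ 0) (hq : q ≠ -p) {n : ℕ} {S : Finset ℝ} (hS : n < S.card) {P Q : ℕ → V}
    (h : ∀ t ∈ S, ∑ k ∈ Finset.range (n + 1), pqBernstein p q n k t • P k =
      ∑ k ∈ Finset.range (n + 1), pqBernstein p q n k t • Q k) :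
    ∀ k ≤ n, P k = Q k := by
  have hsum (t : S) : ∑ k : Fin (n + 1), pqBernstein p q n k t • (P k - Q k) = 0 := by
    simpa only [smul_sub, Finset.sum_sub_distrib, Finset.sum_range, sub_eq_zero] using h t t.2
  have hzero : (fun k : Fin (n + 1) ↦ P k - Q k) = 0 :=
    eq_zero_of_linearIndependent_of_sum_apply_smul_eq_zero
      (linearIndependent_pqBernstein_of_lt_card hp hq hS) hsum
  exact fun k hk ↦ sub_eq_zero.mp (congrFun hzero ⟨k, Nat.lt_succ_of_le hk⟩)

/-- uniqueness of (p,q)-Bézier control points: two (p,q)-Bézier curves of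
degree `n` that agree for all `t` have the same control points. -/
theorem pqBezier_control_points_unique (n d : ℕ) (hn : 1 ≤ n) (hd : 1 ≤ d)
    (p q : ℝ) (h0 : 0 < q) (hqp : q < p)
    (P Q : ℕ → Fin d → ℝ)
    (h : ∀ t : ℝ, ∑ k ∈ Finset.range (n + 1), pqBernstein p q n k t • P k =
      ∑ k ∈ Finset.range (n + 1), pqBernstein p q n k t • Q k) :
    ∀ k ≤ n, P k = Q k := by
  obtain ⟨S, hS⟩ := Infinite.exists_subset_card_eq ℝ (n + 1)
  have hq : -p < q := by linarith
  exact pqBezier_control_points_unique_general (h0.trans hqp).ne' hq.ne'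
    (n.lt_succ_self.trans_eq hS.symm) fun t _ ↦ h t
end
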